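/- Let π : V → End(V) be a linear map that is skew-symmetric in the sense that π(u)(v) = −π(v)(u) for all u, v ∈ V, and let G_π = {(π(u), u) : u ∈ V} ⊆ ℰ be its graph. Then G_π = G_π^⊥; moreover the following are equivalent: (i) G_π is closed under the bracket ⦃·,·⦄ (i.e. G_π is a Dirac structure); (ii) π(π(u)(v)) = π(u)∘π(v) − π(v)∘π(u) for all u, v ∈ V; (iii) the bracket (u,v) ↦ π(u)(v) makes V a Lie algebra. -/

import Mathlib

/-!
For every linear `π`, `G_π^⊥` is the graph of `-π.flip`, and skew-symmetry says exactly that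
`-π.flip = π`. The bracket of `(π u, u)` and `(π v, v)` has second component `π u v`, so closedness
of `G_π` says that `π` sends `π u v` to the commutator of `π u` and `π v`; for skew-symmetric `π`
the failure of this identity, evaluated at `w`, is the Jacobiator of `u`, `v`, `w`.
-/

variable {V : Type*} [AddCommGroup V] [Module ℝ V] [FiniteDimensional ℝ V]

/-- The bracket of the omni-Lie algebra `ℰ = End(V) × V`:
`⦃(A,u),(B,v)⦄ = (A∘B − B∘A, A(v))`. -/
def obr (X Y : (V →ₗ[ℝ] V) × V) : (V →ₗ[ℝ] V) × V :=
  (X.1 ∘ₗ Y.1 - Y.1 ∘ₗ X.1, X.1 Y.2)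

/-- The symmetric `V`-valued pairing `⟨(A,u),(B,v)⟩ = (1/2)(A(v) + B(u))`. -/
noncomputable def opair (X Y : (V →ₗ[ℝ] V) × V) : V :=
  (1/2 : ℝ) • (X.1 Y.2 + Y.1 X.2)

/-- `S^⊥ = {X ∈ ℰ : ⟨X,l⟩ = 0 for all l ∈ S}`. -/
def perpSet (S : Set ((V →ₗ[ℝ] V) × V)) : Set ((V →ₗ[ℝ] V) × V) :=
  {X | ∀ l ∈ S, opair X l = 0}

section Graph

variable {R M N : Type*} [Semiring R] [AddCommMonoid M] [AddCommMonoid N] [Module R M] [Module R N]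

/-- The graph `{(f u, u)}` of a linear map, with the value in the first component as in
`ℰ = End(V) × V`; `LinearMap.graph` has the components in the other order. -/
def valueFirstGraph (f : M →ₗ[R] N) : Set (N × M) :=
  {X | X.1 = f X.2}

theorem forall_mem_valueFirstGraph {f : M →ₗ[R] N} {p : N × M → Prop} :
    (∀ X ∈ valueFirstGraph f, p X) ↔ ∀ u, p (f u, u) :=
  ⟨fun h u => h (f u, u) rfl, fun h ⟨_, u⟩ hX => by
    obtain rfl : _ = f u := hX
    exact h u⟩

end Graph

section Skew

variable {R M : Type*} [CommSemiring R] [AddCommGroup M] [Module R M] {π : M →ₗ[R] M →ₗ[R] M}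

theorem neg_flip_eq_self_iff : -π.flip = π ↔ ∀ u v, π u v = -π v u := by
  rw [LinearMap.ext_iff₂]
  exact forall₂_congr fun _ _ => eq_comm

theorem jacobiator_eq_commutator_sub (hskew : ∀ u v, π u v = -π v u) (u v w : M) :
    π u (π v w) + π v (π w u) + π w (π u v) =
      (π u ∘ₗ π v - π v ∘ₗ π u) w - π (π u v) w := by
  rw [LinearMap.sub_apply, LinearMap.comp_apply, LinearMap.comp_apply,
    hskew w u, hskew w (π u v), map_neg]
  abel

theorem map_eq_commutator_iff_jacobi (hskew : ∀ u v, π u v = -π v u) :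
    (∀ u v, π (π u v) = π u ∘ₗ π v - π v ∘ₗ π u) ↔
      ∀ u v w, π u (π v w) + π v (π w u) + π w (π u v) = 0 := by
  simp only [jacobiator_eq_commutator_sub hskew, sub_eq_zero, LinearMap.ext_iff]
  exact forall₃_congr fun _ _ _ => eq_comm

end Skew

section OmniLie

variable {W : Type*} [AddCommGroup W] [Module ℝ W]

theorem opair_eq_zero_iff (X Y : (W →ₗ[ℝ] W) × W) : opair X Y = 0 ↔ X.1 Y.2 = -Y.1 X.2 := by
  rw [opair, smul_eq_zero_iff_right (by norm_num), add_eq_zero_iff_eq_neg]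

theorem perpSet_valueFirstGraph (π : W →ₗ[ℝ] W →ₗ[ℝ] W) :
    perpSet (valueFirstGraph π) = valueFirstGraph (-π.flip) := by
  ext ⟨A, u⟩
  calc (A, u) ∈ perpSet (valueFirstGraph π)
      ↔ ∀ v, opair (A, u) (π v, v) = 0 := forall_mem_valueFirstGraph
    _ ↔ ∀ v, A v = (-π.flip) u v := forall_congr' fun v => opair_eq_zero_iff (A, u) (π v, v)
    _ ↔ (A, u) ∈ valueFirstGraph (-π.flip) := LinearMap.ext_iff.symm

theorem forall_obr_mem_valueFirstGraph_iff (π : W →ₗ[ℝ] W →ₗ[ℝ] W) :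
    (∀ X ∈ valueFirstGraph π, ∀ Y ∈ valueFirstGraph π, obr X Y ∈ valueFirstGraph π) ↔
      ∀ u v, π (π u v) = π u ∘ₗ π v - π v ∘ₗ π u := by
  simp only [forall_mem_valueFirstGraph]
  exact forall₂_congr fun _ _ => eq_comm

theorem graph_dirac_characterization_general (π : W →ₗ[ℝ] W →ₗ[ℝ] W)
    (hskew : ∀ u v, π u v = -π v u) :
    valueFirstGraph π = perpSet (valueFirstGraph π) ∧
    ((∀ X ∈ valueFirstGraph π, ∀ Y ∈ valueFirstGraph π, obr X Y ∈ valueFirstGraph π) ↔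
      ∀ u v, π (π u v) = π u ∘ₗ π v - π v ∘ₗ π u) ∧
    ((∀ u v, π (π u v) = π u ∘ₗ π v - π v ∘ₗ π u) ↔
      ∀ u v w, π u (π v w) + π v (π w u) + π w (π u v) = 0) := by
  refine ⟨?_, forall_obr_mem_valueFirstGraph_iff π, map_eq_commutator_iff_jacobi hskew⟩
  rw [perpSet_valueFirstGraph, neg_flip_eq_self_iff.mpr hskew]

end OmniLie

/-- For a skew-symmetric linear map `π : V → End(V)` with graph
`G_π = {(π(u),u) : u ∈ V}`: `G_π = G_π^⊥`, and the following are equivalent: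
(i) `G_π` is closed under the bracket; (ii) `π(π(u)(v)) = π(u)∘π(v) − π(v)∘π(u)`;
(iii) `(u,v) ↦ π(u)(v)` is a Lie bracket on `V`. -/
theorem graph_dirac_characterization (π : V →ₗ[ℝ] V →ₗ[ℝ] V)
    (hskew : ∀ u v : V, π u v = - π v u) :
    ({X | X.1 = π X.2} : Set ((V →ₗ[ℝ] V) × V)) =
        perpSet ({X | X.1 = π X.2} : Set ((V →ₗ[ℝ] V) × V)) ∧
    ((∀ X ∈ ({X | X.1 = π X.2} : Set ((V →ₗ[ℝ] V) × V)),
        ∀ Y ∈ ({X | X.1 = π X.2} : Set ((V →ₗ[ℝ] V) × V)),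
          obr X Y ∈ ({X | X.1 = π X.2} : Set ((V →ₗ[ℝ] V) × V))) ↔
      (∀ u v : V, π (π u v) = π u ∘ₗ π v - π v ∘ₗ π u)) ∧
    ((∀ u v : V, π (π u v) = π u ∘ₗ π v - π v ∘ₗ π u) ↔
      (∀ u v w : V, π u (π v w) + π v (π w u) + π w (π u v) = 0)) :=
  graph_dirac_characterization_general π hskew
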